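/- Let q be a prime power and let δ ∈ (0, 1 − 1/q²) be a constant. Then there exist constants c > 0 and c'' > 0 such that for all sufficiently large n the following holds with d − 1 = ⌊δn⌋: for every integer ℓ with 1 ≤ ℓ ≤ c''√n, the number of ℓ-tuples (u_1, …, u_ℓ) of vectors in B_q^S(2n, d−1) that are linearly independent over 𝔽_q and pairwise symplectically orthogonal (⟨u_i, u_j⟩_S = 0 for all i, j) is at least (1 − q^{−cn}) · Vol_q^S(2n, d−1)^ℓ / q^{ℓ(ℓ−1)/2}. -/

import Mathlib

open Finset
open scoped Classical

/-- Symplectic weight of a vector in `F^{2n}`, written as `Fin n → F × F`. -/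
noncomputable def sympWt {F : Type} [Zero F] [DecidableEq F] {n : ℕ} (u : Fin n → F × F) : ℕ :=
  hammingNorm u

/-- The symplectic inner product on `F^{2n}`: `⟨(a|b),(a'|b')⟩_S = ⟨a,b'⟩ - ⟨b,a'⟩`. -/
def sympInner {F : Type} [Field F] {n : ℕ} (u v : Fin n → F × F) : F :=
  ∑ i, ((u i).1 * (v i).2 - (u i).2 * (v i).1)

/-- The symplectic ball `B_q^S(2n, r)` of radius `r`. -/
noncomputable def sympBall (F : Type) [Fintype F] [Zero F] [DecidableEq F] (n r : ℕ) :
    Finset (Fin n → F × F) :=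
  Finset.univ.filter fun x => sympWt x ≤ r

/-- `Vol_q^S(2n, r) = ∑_{i=0}^{r} C(n,i)(q²-1)^i`, the volume of the symplectic ball. -/
def volS (q n r : ℕ) : ℕ :=
  ∑ i ∈ Finset.range (r + 1), n.choose i * (q ^ 2 - 1) ^ i


open Polynomial in
lemma aux_ball_sum {F : Type} [Field F] [Fintype F] [DecidableEq F] {R : Type} [CommSemiring R]
    (n r : ℕ) (α : Fin n → F × F → R) :
    ∑ x ∈ sympBall F n r, ∏ i, α i (x i) =
      ∑ k ∈ Finset.range (r + 1),
        (∏ i, (C (α i 0) + C (∑ y ∈ Finset.univ.erase (0 : F × F), α i y) * X)).coeff k := by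
  have h1 : ∀ i, (C (α i 0) + C (∑ y ∈ Finset.univ.erase (0 : F × F), α i y) * X : R[X])
      = ∑ y : F × F, C (α i y) * X ^ (if y = 0 then 0 else 1) := by
    intro i
    rw [← Finset.add_sum_erase _ _ (Finset.mem_univ (0 : F × F))]
    simp only [if_true, pow_zero, mul_one, map_sum, Finset.sum_mul]
    congr 1
    apply Finset.sum_congr rfl
    intro y hy
    simp [(Finset.mem_erase.1 hy).1]
  simp_rw [h1]
  rw [Finset.prod_univ_sum]
  simp only [Fintype.piFinset_univ, finsetSum_coeff]
  rw [Finset.sum_comm]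
  have h2 : ∀ x : Fin n → F × F, ∏ i, (C (α i (x i)) * X ^ (if x i = 0 then 0 else 1) : R[X])
      = C (∏ i, α i (x i)) * X ^ (sympWt x) := by
    intro x
    rw [Finset.prod_mul_distrib, map_prod, Finset.prod_pow_eq_pow_sum]
    congr 2
    unfold sympWt hammingNorm
    rw [Finset.card_filter]
    apply Finset.sum_congr rfl
    intro i _
    by_cases h : x i = 0 <;> simp [h]
  simp_rw [h2, coeff_C_mul_X_pow]
  unfold sympBall
  rw [Finset.sum_filter]
  apply Finset.sum_congr rfl
  intro x _
  rw [Finset.sum_ite_eq']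
  simp

open Polynomial in
def GoodP (D : ℝ) (P : ℝ[X]) : Prop :=
  ∀ k : ℕ, 0 ≤ P.coeff k ∧ ((k : ℝ) + 1) * P.coeff (k + 1) ≤ D * P.coeff k

open Polynomial in
lemma coeff_lin_succ {R : Type} [CommSemiring R] (a b : R) (P : R[X]) (k : ℕ) :
    ((C a + C b * X) * P).coeff (k + 1) = a * P.coeff (k + 1) + b * P.coeff k := by
  rw [add_mul, coeff_add, coeff_C_mul, mul_assoc, coeff_C_mul, coeff_X_mul]

open Polynomial in
lemma coeff_lin_zero {R : Type} [CommSemiring R] (a b : R) (P : R[X]) :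
    ((C a + C b * X) * P).coeff 0 = a * P.coeff 0 := by
  simp [mul_coeff_zero]

open Polynomial in
lemma GoodP.mul {D M a b : ℝ} {P : ℝ[X]} (hP : GoodP D P) (ha : 0 ≤ a) (hb : 0 ≤ b)
    (hba : b ≤ M * a) (hM : 0 ≤ M) : GoodP (D + M) ((C a + C b * X) * P) := by
  intro k
  cases k with
  | zero =>
    rw [coeff_lin_succ, coeff_lin_zero]
    obtain ⟨h0, h1⟩ := hP 0
    refine ⟨by positivity, ?_⟩
    push_cast at *
    nlinarith [mul_le_mul_of_nonneg_left h1 ha, mul_le_mul_of_nonneg_right hba h0]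
  | succ k =>
    rw [coeff_lin_succ, coeff_lin_succ]
    obtain ⟨h0, h1⟩ := hP k
    obtain ⟨h2, h3⟩ := hP (k + 1)
    refine ⟨by positivity, ?_⟩
    push_cast at *
    nlinarith [mul_le_mul_of_nonneg_left h3 ha, mul_le_mul_of_nonneg_right hba h2,
      mul_le_mul_of_nonneg_left h1 hb, mul_nonneg hM (mul_nonneg hb h0)]

open Polynomial in
lemma GoodP.one : GoodP 0 1 := by
  intro k
  rw [coeff_one, coeff_one]
  constructor
  · split_ifs <;> norm_num
  · simp

open Polynomial in
lemma GoodP.prod {ι : Type} {M : ℝ} (hM : 0 ≤ M) (a b : ι → ℝ) (s : Finset ι)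
    (h : ∀ i ∈ s, 0 ≤ a i ∧ 0 ≤ b i ∧ b i ≤ M * a i) :
    GoodP (M * s.card) (∏ i ∈ s, (C (a i) + C (b i) * X)) := by
  induction s using Finset.induction_on with
  | empty => simpa using GoodP.one
  | insert i s hi ih =>
    rw [Finset.prod_insert hi, Finset.card_insert_of_notMem hi]
    obtain ⟨h1, h2, h3⟩ := h i (Finset.mem_insert_self _ _)
    have := (ih fun j hj => h j (Finset.mem_insert_of_mem hj)).mul h1 h2 h3 hM
    convert this using 1
    push_cast; ring

open Polynomial in
lemma GoodP.mul_pow {D M Q : ℝ} {P : ℝ[X]} (hP : GoodP D P) (hQ : 0 ≤ Q)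
    (hba : Q ≤ M) (m : ℕ) : GoodP (D + M * m) (P * (C 1 + C Q * X) ^ m) := by
  induction m with
  | zero => simpa using hP
  | succ m ih =>
    have := ih.mul (M := M) zero_le_one hQ (by linarith) (by linarith)
    convert this using 1
    · push_cast; ring
    · ring

open Polynomial in
/-- partial sums of coefficients -/
noncomputable def psum (P : ℝ[X]) (r : ℕ) : ℝ := ∑ k ∈ Finset.range (r + 1), P.coeff k

open Polynomial in
lemma psum_lin (a b : ℝ) (P : ℝ[X]) (r : ℕ) :
    psum ((C a + C b * X) * P) (r + 1) = a * psum P (r + 1) + b * psum P r := by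
  unfold psum
  rw [Finset.sum_range_succ' _ (r + 1)]
  simp only [coeff_lin_succ, coeff_lin_zero]
  rw [Finset.sum_range_succ' _ (r + 1), Finset.sum_add_distrib, Finset.mul_sum, mul_add,
    Finset.mul_sum]
  ring

open Polynomial in
lemma psum_ratio {D L : ℝ} {P : ℝ[X]} (hP : GoodP D P) (r : ℕ) (hD : D ≤ L * (r + 1)) :
    0 ≤ psum P r ∧ psum P r ≤ psum P (r + 1) ∧ psum P (r + 1) ≤ (1 + L) * psum P r := by
  have h0 : 0 ≤ psum P r := Finset.sum_nonneg fun k _ => (hP k).1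
  have h1 : psum P (r + 1) = psum P r + P.coeff (r + 1) := Finset.sum_range_succ _ _
  have h2 : P.coeff r ≤ psum P r :=
    Finset.single_le_sum (f := fun k => P.coeff k) (fun k _ => (hP k).1)
      (Finset.mem_range.2 (Nat.lt_succ_self r))
  have h3 := (hP r).2
  have h4 := (hP (r + 1)).1
  have h5 := (hP r).1
  refine ⟨h0, by linarith, ?_⟩
  have hr : (0 : ℝ) < r + 1 := by positivity
  have h6 : ((r : ℝ) + 1) * P.coeff (r + 1) ≤ (r + 1) * (L * P.coeff r) := by
    nlinarith [mul_le_mul_of_nonneg_right hD h5]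
  have h7 := le_of_mul_le_mul_left h6 hr
  have hL : 0 ≤ L ∨ P.coeff r = 0 := by
    by_contra! hh
    have : 0 < P.coeff r := lt_of_le_of_ne h5 (Ne.symm hh.2)
    nlinarith
  rcases hL with hL | hL
  · nlinarith [mul_le_mul_of_nonneg_left h2 hL]
  · by_cases hL' : 0 ≤ L
    · nlinarith [mul_le_mul_of_nonneg_left h2 hL']
    · -- then all coefficients vanish
      have hz : ∀ k ≤ r, P.coeff k = 0 := by
        intro k hk
        by_contra hne
        have hpos : 0 < P.coeff k := lt_of_le_of_ne (hP k).1 (Ne.symm hne)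
        have hDneg : D < 0 := by nlinarith
        have := (hP k).2
        have := (hP (k + 1)).1
        have : 0 ≤ ((k : ℝ) + 1) * P.coeff (k + 1) := by positivity
        nlinarith
      have : psum P r = 0 := Finset.sum_eq_zero fun k hk =>
        hz k (Nat.lt_succ_iff.1 (Finset.mem_range.1 hk))
      rw [h1, this]; rw [hL] at h7; linarith

open Polynomial in
lemma key_prod {ι : Type} {M Q L : ℝ} (hQ : 0 ≤ Q) (hQM : Q ≤ M) (a b κ : ι → ℝ) (r n : ℕ)
    (hn : M * n ≤ L * (r + 1))
    (hκ : ∀ i, 0 ≤ κ i ∧ ∀ s t : ℝ, 0 ≤ s → s ≤ t → t ≤ (1 + L) * s →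
      a i * t + b i * s ≤ κ i * (t + Q * s))
    (hab : ∀ i, 0 ≤ a i ∧ 0 ≤ b i ∧ b i ≤ M * a i) (s : Finset ι) :
    ∀ m : ℕ, s.card + m ≤ n →
    psum ((∏ i ∈ s, (C (a i) + C (b i) * X)) * (C 1 + C Q * X) ^ m) (r + 1) ≤
      (∏ i ∈ s, κ i) * psum ((C 1 + C Q * X) ^ (s.card + m)) (r + 1) := by
  induction s using Finset.induction_on with
  | empty => intro m _; simp
  | insert i s hi ih =>
    intro m hm
    rw [Finset.card_insert_of_notMem hi] at hm ⊢
    rw [Finset.prod_insert hi, Finset.prod_insert hi, mul_assoc]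
    set R := (∏ i ∈ s, (C (a i) + C (b i) * X)) * (C 1 + C Q * X) ^ m with hR
    have hg : GoodP (M * s.card + M * m) R :=
      (GoodP.prod (hQ.trans hQM) a b s fun i _ => hab i).mul_pow hQ hQM m
    have hD : M * s.card + M * m ≤ L * (r + 1) := by
      refine le_trans ?_ hn
      rw [← mul_add]
      apply mul_le_mul_of_nonneg_left _ (hQ.trans hQM)
      exact_mod_cast (by omega : s.card + m ≤ n)
    obtain ⟨g0, g1, g2⟩ := psum_ratio hg r hD
    have h1 := (hκ i).2 _ _ g0 g1 g2
    rw [psum_lin]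
    refine h1.trans ?_
    rw [mul_assoc]
    apply mul_le_mul_of_nonneg_left _ (hκ i).1
    have h2 := ih (m + 1) (by omega)
    have h3 := psum_lin 1 Q R r
    rw [one_mul] at h3
    rw [← h3]
    have e : (C 1 + C Q * X) * R =
        (∏ i ∈ s, (C (a i) + C (b i) * X)) * (C 1 + C Q * X) ^ (m + 1) := by
      rw [hR]; ring
    rw [e, add_assoc, add_comm 1 m]
    exact h2

open Polynomial in
lemma norm_coeff_prod {ι : Type} (s : Finset ι) (c : ι → ℂ) (b : ι → ℝ)
    (h : ∀ i, ‖c i‖ ≤ b i) (k : ℕ) :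
    ‖(∏ i ∈ s, (C 1 + C (c i) * X)).coeff k‖ ≤ (∏ i ∈ s, (C 1 + C (b i) * X)).coeff k := by
  induction s using Finset.induction_on generalizing k with
  | empty => simp only [Finset.prod_empty, coeff_one]; split_ifs <;> simp
  | insert i s hi ih =>
    rw [Finset.prod_insert hi, Finset.prod_insert hi]
    cases k with
    | zero => rw [coeff_lin_zero, coeff_lin_zero]; simpa using ih 0
    | succ k =>
      rw [coeff_lin_succ, coeff_lin_succ]
      refine (norm_add_le _ _).trans ?_
      rw [norm_mul, norm_mul, norm_one]
      gcongr
      · exact ih _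
      · exact (norm_nonneg _).trans (h i)
      · exact h i
      · exact ih _

lemma addchar_sum {F ι : Type} [Field F] (ψ : AddChar F ℂ) (s : Finset ι) (f : ι → F) :
    ψ (∑ i ∈ s, f i) = ∏ i ∈ s, ψ (f i) := by
  induction s using Finset.induction_on with
  | empty => simp
  | insert i s hi ih => rw [Finset.sum_insert hi, Finset.prod_insert hi, AddChar.map_add_eq_mul, ih]

lemma card_erase_zero {F : Type} [Field F] [Fintype F] [DecidableEq F] :
    (Finset.univ.erase (0 : F × F)).card = Fintype.card F ^ 2 - 1 := by
  rw [Finset.card_erase_of_mem (Finset.mem_univ _), Finset.card_univ, Fintype.card_prod, sq]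

open Polynomial in
lemma card_ball_psum {F : Type} [Field F] [Fintype F] [DecidableEq F] (n r : ℕ) :
    ((sympBall F n r).card : ℝ) =
      psum ((C 1 + C ((Fintype.card F : ℝ) ^ 2 - 1) * X) ^ n) r := by
  have h := aux_ball_sum (F := F) (R := ℝ) n r (fun _ _ => 1)
  have hc : (1 : ℕ) ≤ Fintype.card F ^ 2 := Nat.one_le_pow _ _ Fintype.card_pos
  simp only [Finset.prod_const_one, Finset.sum_const, nsmul_eq_mul, mul_one,
    Finset.prod_const, card_erase_zero, Finset.card_univ, Fintype.card_fin] at h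
  rw [h]
  unfold psum
  push_cast [hc]
  rfl

open Polynomial in
lemma card_ball_volS {F : Type} [Field F] [Fintype F] [DecidableEq F] (n r : ℕ) :
    (sympBall F n r).card = volS (Fintype.card F) n r := by
  have h := aux_ball_sum (F := F) (R := ℕ) n r (fun _ _ => 1)
  simp only [Finset.prod_const_one, Finset.sum_const, smul_eq_mul, mul_one,
    Finset.prod_const, card_erase_zero, Finset.card_univ, Fintype.card_fin] at h
  rw [h]
  unfold volS
  apply Finset.sum_congr rfl
  intro k _
  rw [add_comm, add_pow]
  simp only [finsetSum_coeff, map_one, one_pow, mul_one, mul_pow, ← C_pow]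
  simp_rw [← C_eq_natCast, mul_assoc, mul_comm (X ^ _ : ℕ[X]) (C _), coeff_C_mul, coeff_X_pow]
  simp only [mul_ite, mul_one, mul_zero]
  rw [Finset.sum_ite_eq]
  split_ifs with hk
  · simp [mul_comm]
  · rw [Nat.choose_eq_zero_of_lt (by simpa using hk)]; simp

lemma pow_wt {F : Type} [Field F] [DecidableEq F] {n : ℕ} (κ : ℝ) (z : Fin n → F × F) :
    κ ^ sympWt z = ∏ i, (if z i = 0 then 1 else κ) := by
  unfold sympWt hammingNorm
  rw [Finset.prod_ite]
  simp

lemma sum_char {F : Type} [Field F] [Fintype F] [DecidableEq F] (ψ : AddChar F ℂ)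
    (hψ : ψ.IsPrimitive) (z : F × F) :
    ∑ y ∈ Finset.univ.erase (0 : F × F), ψ (y.1 * z.2 - y.2 * z.1) =
      if z = 0 then (((Fintype.card F : ℝ) ^ 2 - 1 : ℝ) : ℂ) else -1 := by
  have h1 := Finset.add_sum_erase Finset.univ
    (fun y : F × F => ψ (y.1 * z.2 - y.2 * z.1)) (Finset.mem_univ 0)
  have h2 : ∑ y : F × F, ψ (y.1 * z.2 - y.2 * z.1) =
      if z = 0 then ((Fintype.card F : ℂ) ^ 2) else 0 := by
    rw [Fintype.sum_prod_type]
    simp only [sub_eq_add_neg, AddChar.map_add_eq_mul, ← mul_neg]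
    rw [← Finset.sum_mul_sum, AddChar.sum_mulShift _ hψ, AddChar.sum_mulShift _ hψ]
    rcases z with ⟨z1, z2⟩
    by_cases h1 : z1 = 0 <;> by_cases h2 : z2 = 0 <;> simp [h1, h2, sq]
  rw [h2] at h1
  simp only [Prod.fst_zero, Prod.snd_zero, zero_mul, sub_zero, AddChar.map_zero_eq_one] at h1
  rw [eq_sub_of_add_eq' h1]
  split_ifs <;> simp

open Polynomial in
lemma hat_bound {F : Type} [Field F] [Fintype F] [DecidableEq F] (ψ : AddChar F ℂ)
    (hψ : ψ.IsPrimitive) (n r : ℕ) (Q L κ : ℝ) (hQ : Q = (Fintype.card F : ℝ) ^ 2 - 1)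
    (hQ1 : 1 ≤ Q) (hn : 2 * Q * n ≤ L * (r + 1)) (hκ0 : 0 ≤ κ)
    (hκ : ∀ s t : ℝ, 0 ≤ s → s ≤ t → t ≤ (1 + L) * s → t + s ≤ κ * (t + Q * s))
    (z : Fin n → F × F) :
    ‖∑ x ∈ sympBall F n (r + 1), ψ (sympInner x z)‖ ≤
      κ ^ sympWt z * (sympBall F n (r + 1)).card := by
  have h1 : ∀ x : Fin n → F × F, ψ (sympInner x z) =
      ∏ i, (fun i (y : F × F) => ψ (y.1 * (z i).2 - y.2 * (z i).1)) i (x i) := by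
    intro x
    unfold sympInner
    exact addchar_sum ψ _ _
  rw [Finset.sum_congr rfl (fun x _ => h1 x),
    aux_ball_sum n (r + 1) (fun i (y : F × F) => ψ (y.1 * (z i).2 - y.2 * (z i).1))]
  simp only [sum_char ψ hψ, Prod.fst_zero, Prod.snd_zero, zero_mul, sub_zero,
    AddChar.map_zero_eq_one]
  refine (norm_sum_le _ _).trans ?_
  have h2 := key_prod (ι := Fin n) (M := 2 * Q) (Q := Q) (L := L) (by linarith) (by linarith)
    (fun _ => 1) (fun i => if z i = 0 then Q else 1) (fun i => if z i = 0 then 1 else κ) r n hn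
    (by
      intro i
      split_ifs
      · exact ⟨zero_le_one, fun s t _ _ _ => by linarith⟩
      · exact ⟨hκ0, fun s t h1 h2 h3 => by linarith [hκ s t h1 h2 h3]⟩)
    (by
      intro i
      split_ifs
      · exact ⟨zero_le_one, by linarith, by linarith⟩
      · exact ⟨zero_le_one, by linarith, by linarith⟩) Finset.univ 0 (by simp)
  simp only [pow_zero, mul_one, add_zero, Finset.card_univ, Fintype.card_fin] at h2
  rw [card_ball_psum, pow_wt, ← hQ]
  refine le_trans ?_ h2
  unfold psum
  apply Finset.sum_le_sum
  intro k _
  apply norm_coeff_prod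
  intro i
  split_ifs
  · simp [abs_of_nonneg (by linarith : 0 ≤ Q)]
  · simp

open Polynomial in
lemma shift_bound {F : Type} [Field F] [Fintype F] [DecidableEq F] 
    (n r : ℕ) (Q L κ θ : ℝ) (hQ : Q = (Fintype.card F : ℝ) ^ 2 - 1)
    (hQ1 : 1 ≤ Q) (hn : 2 * Q * n ≤ L * (r + 1)) (hκ0 : 1 / 2 ≤ κ) (hκ1 : κ ≤ 1) (hθ0 : 0 ≤ θ)
    (hθ1 : ∀ s t : ℝ, 0 ≤ s → s ≤ t → t ≤ (1 + L) * s → t + Q * κ * s ≤ θ * (t + Q * s))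
    (hθ2 : ∀ s t : ℝ, 0 ≤ s → s ≤ t → t ≤ (1 + L) * s →
      κ * t + (1 + Q * κ - κ) * s ≤ θ * (t + Q * s))
    (a : F) (ha : a ≠ 0) (w : Fin n → F × F) :
    ∑ x ∈ sympBall F n (r + 1), κ ^ sympWt (a • x + w) ≤
      θ ^ n * (sympBall F n (r + 1)).card := by
  have h1 : ∀ x : Fin n → F × F, κ ^ sympWt (a • x + w) =
      ∏ i, (fun i (y : F × F) => if a • y + w i = 0 then 1 else κ) i (x i) := by
    intro x
    rw [pow_wt]
    rfl
  rw [Finset.sum_congr rfl (fun x _ => h1 x),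
    aux_ball_sum n (r + 1) (fun i (y : F × F) => if a • y + w i = 0 then 1 else κ)]
  have hb : ∀ i, ∑ y ∈ Finset.univ.erase (0 : F × F), (if a • y + w i = 0 then 1 else κ) =
      1 + Q * κ - (if w i = 0 then 1 else κ) := by
    intro i
    have h1 := Finset.add_sum_erase Finset.univ
      (fun y : F × F => if a • y + w i = 0 then 1 else κ) (Finset.mem_univ 0)
    have h2 : ∑ y : F × F, (if a • y + w i = 0 then 1 else κ) = 1 + Q * κ := by
      let e : (F × F) ≃ (F × F) :=
        { toFun := fun y => a • y + w i
          invFun := fun y => a⁻¹ • (y - w i)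
          left_inv := fun y => by simp [smul_smul, ha]
          right_inv := fun y => by simp [smul_smul, ha] }
      rw [show ∑ y : F × F, (if a • y + w i = 0 then 1 else κ) =
        ∑ y : F × F, (if y = 0 then 1 else κ) from
          Equiv.sum_comp e (fun y => if y = 0 then 1 else κ)]
      rw [← Finset.add_sum_erase _ _ (Finset.mem_univ (0 : F × F))]
      rw [Finset.sum_congr rfl (g := fun _ => κ)]
      · have hc : (1 : ℕ) ≤ Fintype.card F ^ 2 := Nat.one_le_pow _ _ Fintype.card_pos
        rw [Finset.sum_const, card_erase_zero, hQ, nsmul_eq_mul]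
        push_cast [hc]
        simp
      · intro y hy
        simp [(Finset.mem_erase.1 hy).1]
    rw [h2] at h1
    simp only [smul_zero, zero_add] at h1
    linarith
  simp only [hb, smul_zero, zero_add]
  have h2 := key_prod (ι := Fin n) (M := 2 * Q) (Q := Q) (L := L) (by linarith) (by linarith)
    (fun i => if w i = 0 then 1 else κ) (fun i => 1 + Q * κ - if w i = 0 then 1 else κ)
    (fun i => θ) r n hn
    (by
      intro i
      refine ⟨hθ0, ?_⟩
      split_ifs
      · exact fun s t h1 h2 h3 => by linarith [hθ1 s t h1 h2 h3]
      · exact fun s t h1 h2 h3 => by linarith [hθ2 s t h1 h2 h3])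
    (by
      intro i
      split_ifs
      · refine ⟨zero_le_one, ?_, ?_⟩ <;> nlinarith
      · refine ⟨by linarith, ?_, ?_⟩ <;> nlinarith) Finset.univ 0 (by simp)
  simp only [pow_zero, mul_one, add_zero, Finset.card_univ, Fintype.card_fin,
    Finset.prod_const] at h2
  rw [card_ball_psum, ← hQ]
  exact h2

/-- Choice of the constants. -/
lemma const_exist (Q L : ℝ) (hQ : 3 ≤ Q) (hL : 1 ≤ L) : ∃ κ θ : ℝ, 1 / 2 ≤ κ ∧ κ ≤ 1 ∧
    0 < θ ∧ θ < 1 ∧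
    (∀ s t : ℝ, 0 ≤ s → s ≤ t → t ≤ (1 + L) * s → t + s ≤ κ * (t + Q * s)) ∧
    (∀ s t : ℝ, 0 ≤ s → s ≤ t → t ≤ (1 + L) * s → t + Q * κ * s ≤ θ * (t + Q * s)) ∧
    (∀ s t : ℝ, 0 ≤ s → s ≤ t → t ≤ (1 + L) * s →
      κ * t + (1 + Q * κ - κ) * s ≤ θ * (t + Q * s)) := by
  -- e = 1 - κ
  obtain ⟨e, he⟩ : ∃ e : ℝ, e = (Q - 1) / ((1 + Q) * (1 + L)) := ⟨_, rfl⟩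
  obtain ⟨f, hf⟩ : ∃ f : ℝ, f = e / ((1 + Q) * (1 + L)) := ⟨_, rfl⟩
  have hp : 0 < (1 + Q) * (1 + L) := by positivity
  have he' : e * ((1 + Q) * (1 + L)) = Q - 1 := by rw [he]; field_simp
  have hf' : f * ((1 + Q) * (1 + L)) = e := by rw [hf]; field_simp
  have he0 : 0 < e := by rw [he]; apply div_pos <;> linarith
  have hf0 : 0 < f := by rw [hf]; positivity
  have he1 : e ≤ 1 / 2 := by rw [he, div_le_iff₀ hp]; nlinarith
  have hf1 : f < 1 := by rw [hf, div_lt_one hp]; nlinarith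
  have hs : ∀ s t : ℝ, 0 ≤ s → s ≤ t → t ≤ (1 + L) * s → t + Q * s ≤ (1 + Q) * (1 + L) * s := by
    intro s t h1 h2 h3
    nlinarith [mul_nonneg (by linarith : 0 ≤ Q) (mul_nonneg (by linarith : 0 ≤ L) h1)]
  refine ⟨1 - e, 1 - f, by linarith, by linarith, by linarith, by linarith, ?_, ?_, ?_⟩
  · intro s t h1 h2 h3
    have := mul_le_mul_of_nonneg_left (hs s t h1 h2 h3) he0.le
    have h4 : e * ((1 + Q) * (1 + L) * s) = (Q - 1) * s := by rw [← he']; ring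
    linarith
  · intro s t h1 h2 h3
    have := mul_le_mul_of_nonneg_left (hs s t h1 h2 h3) hf0.le
    have h4 : f * ((1 + Q) * (1 + L) * s) = e * s := by rw [← hf']; ring
    nlinarith [mul_nonneg he0.le h1]
  · intro s t h1 h2 h3
    have := mul_le_mul_of_nonneg_left (hs s t h1 h2 h3) hf0.le
    have h4 : f * ((1 + Q) * (1 + L) * s) = e * s := by rw [← hf']; ring
    nlinarith [mul_nonneg he0.le h1, mul_le_mul_of_nonneg_left h2 he0.le,
      mul_nonneg (mul_nonneg he0.le h1) (by linarith : 0 ≤ Q - 1)]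

lemma sum_update_avg {ι X R : Type} [Fintype ι] [DecidableEq ι] [AddCommMonoid R]
    (B : Finset X) (i : ι) (f : (ι → X) → R) :
    ∑ u ∈ Fintype.piFinset (fun _ : ι => B), ∑ x ∈ B, f (Function.update u i x) =
      B.card • ∑ u ∈ Fintype.piFinset (fun _ : ι => B), f u := by
  have h : B.card • ∑ u ∈ Fintype.piFinset (fun _ : ι => B), f u =
      ∑ u ∈ Fintype.piFinset (fun _ : ι => B), ∑ _x ∈ B, f u := by
    rw [Finset.smul_sum]
    simp
  rw [h, ← Finset.sum_product', ← Finset.sum_product']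
  refine Finset.sum_nbij' (fun p => (Function.update p.1 i p.2, p.1 i))
    (fun p => (Function.update p.1 i p.2, p.1 i)) ?_ ?_ ?_ ?_ ?_
  · rintro ⟨u, x⟩ h
    simp only [Finset.mem_product, Fintype.mem_piFinset] at h ⊢
    refine ⟨fun j => ?_, h.1 i⟩
    by_cases hj : j = i
    · subst hj; simpa using h.2
    · simpa [hj] using h.1 j
  · rintro ⟨u, x⟩ h
    simp only [Finset.mem_product, Fintype.mem_piFinset] at h ⊢
    refine ⟨fun j => ?_, h.1 i⟩
    by_cases hj : j = i
    · subst hj; simpa using h.2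
    · simpa [hj] using h.1 j
  · rintro ⟨u, x⟩ h; simp
  · rintro ⟨u, x⟩ h; simp
  · rintro ⟨u, x⟩ h; simp

section
variable {F : Type} [Field F] {n : ℕ}

lemma sympInner_zero_left (v : Fin n → F × F) : sympInner 0 v = 0 := by simp [sympInner]

lemma sympInner_zero_right (v : Fin n → F × F) : sympInner v 0 = 0 := by simp [sympInner]

lemma sympInner_swap (u v : Fin n → F × F) : sympInner u v = - sympInner v u := by
  unfold sympInner
  rw [← Finset.sum_neg_distrib]
  apply Finset.sum_congr rfl
  intro i _
  ring

lemma sympInner_self (u : Fin n → F × F) : sympInner u u = 0 := by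
  unfold sympInner
  apply Finset.sum_eq_zero
  intro i _
  ring

lemma sympInner_sum_smul {ι : Type} (s : Finset ι) (c : ι → F) (u : ι → Fin n → F × F)
    (x : Fin n → F × F) :
    sympInner x (∑ j ∈ s, c j • u j) = ∑ j ∈ s, c j * sympInner x (u j) := by
  unfold sympInner
  simp_rw [Finset.mul_sum]
  rw [Finset.sum_comm]
  apply Finset.sum_congr rfl
  intro i _
  simp only [Finset.sum_apply, Prod.fst_sum, Prod.snd_sum, Finset.mul_sum,
    Pi.smul_apply, Prod.smul_fst, Prod.smul_snd, smul_eq_mul]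
  rw [← Finset.sum_sub_distrib]
  apply Finset.sum_congr rfl
  intro j _
  ring

/-- The phase. -/
def phase {ℓ : ℕ} (M : Fin ℓ × Fin ℓ → F) (u : Fin ℓ → Fin n → F × F) : F :=
  ∑ p : Fin ℓ × Fin ℓ, M p * sympInner (u p.1) (u p.2)

lemma phase_update {ℓ : ℕ} (M : Fin ℓ × Fin ℓ → F) (u : Fin ℓ → Fin n → F × F) (i : Fin ℓ)
    (hM : M (i, i) = 0) (x : Fin n → F × F) :
    phase M (Function.update u i x) =
      sympInner x (∑ j, (M (i, j) - M (j, i)) • u j) + phase M (Function.update u i 0) := by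
  unfold phase
  rw [sympInner_sum_smul]
  have h : ∀ p : Fin ℓ × Fin ℓ,
      M p * sympInner (Function.update u i x p.1) (Function.update u i x p.2) =
      ((if p.1 = i then M (i, p.2) * sympInner x (u p.2) else 0) +
      (if p.2 = i then - (M (p.1, i) * sympInner x (u p.1)) else 0)) +
      M p * sympInner (Function.update u i 0 p.1) (Function.update u i 0 p.2) := by
    rintro ⟨k, j⟩
    by_cases hk : k = i <;> by_cases hj : j = i
    · subst hk; subst hj; simp [hM]
    · subst hk; simp [hj, sympInner_zero_left]
    · subst hj; simp [hk, sympInner_zero_right]; rw [sympInner_swap]; ring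
    · simp [hk, hj]
  rw [Finset.sum_congr rfl (fun p _ => h p), Finset.sum_add_distrib, Finset.sum_add_distrib]
  congr 1
  rw [Fintype.sum_prod_type_right, Fintype.sum_prod_type]
  simp only [Finset.sum_ite_eq', Finset.mem_univ, if_true]
  rw [← Finset.sum_add_distrib]
  apply Finset.sum_congr rfl
  intro j _
  ring

lemma lin_update {ℓ : ℕ} (c : Fin ℓ → F) (u : Fin ℓ → Fin n → F × F) (i : Fin ℓ)
    (x : Fin n → F × F) :
    ∑ j, c j • Function.update u i x j = c i • x + ∑ j, c j • Function.update u i 0 j := by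
  rw [← Finset.add_sum_erase _ _ (Finset.mem_univ i),
    ← Finset.add_sum_erase _ (fun j => c j • Function.update u i 0 j) (Finset.mem_univ i)]
  simp only [Function.update_self, smul_zero, zero_add]
  congr 1
  apply Finset.sum_congr rfl
  intro j hj
  simp [(Finset.mem_erase.1 hj).1]

lemma phase_bound [Fintype F] [DecidableEq F] (ψ : AddChar F ℂ) (B : Finset (Fin n → F × F))
    (hB : B.Nonempty) (κ T : ℝ) (hκ : 0 ≤ κ)
    (H1 : ∀ z : Fin n → F × F, ‖∑ x ∈ B, ψ (sympInner x z)‖ ≤ κ ^ sympWt z * B.card)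
    (H2 : ∀ (a : F) (w : Fin n → F × F), a ≠ 0 →
      ∑ x ∈ B, κ ^ sympWt (a • x + w) ≤ T * B.card)
    (ℓ : ℕ) (M : Fin ℓ × Fin ℓ → F) (hM : ∀ p, ¬ p.2 < p.1 → M p = 0) (hM0 : M ≠ 0) :
    ‖∑ u ∈ Fintype.piFinset (fun _ : Fin ℓ => B), ψ (phase M u)‖ ≤ T * (B.card : ℝ) ^ ℓ := by
  have hV : (0 : ℝ) < B.card := by exact_mod_cast hB.card_pos
  obtain ⟨⟨i, k⟩, hik⟩ : ∃ p, M p ≠ 0 := by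
    by_contra! h
    exact hM0 (funext h)
  have hlt : k < i := by
    by_contra h
    exact hik (hM _ h)
  have hki : M (k, i) = 0 := hM _ (by simpa using hlt.le)
  let Z : (Fin ℓ → Fin n → F × F) → (Fin n → F × F) :=
    fun u => ∑ j, (M (i, j) - M (j, i)) • u j
  have s1 := sum_update_avg B i (fun u => ψ (phase M u))
  have s2 : ‖∑ u ∈ Fintype.piFinset (fun _ : Fin ℓ => B), ψ (phase M u)‖ ≤
      ∑ u ∈ Fintype.piFinset (fun _ : Fin ℓ => B), κ ^ sympWt (Z u) := by
    have h3 : (B.card : ℝ) * ‖∑ u ∈ Fintype.piFinset (fun _ : Fin ℓ => B), ψ (phase M u)‖ ≤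
        B.card * ∑ u ∈ Fintype.piFinset (fun _ : Fin ℓ => B), κ ^ sympWt (Z u) := by
      have e : (B.card : ℝ) * ‖∑ u ∈ Fintype.piFinset (fun _ : Fin ℓ => B), ψ (phase M u)‖
          = ‖B.card • ∑ u ∈ Fintype.piFinset (fun _ : Fin ℓ => B), ψ (phase M u)‖ := by
        rw [nsmul_eq_mul, norm_mul]; simp
      rw [e, ← s1, Finset.mul_sum]
      refine (norm_sum_le _ _).trans (Finset.sum_le_sum fun u _ => ?_)
      have hx : ∀ x, ψ (phase M (Function.update u i x)) =
          ψ (sympInner x (Z u)) * ψ (phase M (Function.update u i 0)) := by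
        intro x
        rw [phase_update M u i (hM _ (by simp)) x, AddChar.map_add_eq_mul]
      rw [Finset.sum_congr rfl (fun x _ => hx x), ← Finset.sum_mul, norm_mul, AddChar.norm_apply, mul_one, mul_comm]
      exact H1 _
    exact le_of_mul_le_mul_left h3 hV
  refine s2.trans ?_
  have s3 := sum_update_avg B k (fun u => κ ^ sympWt (Z u))
  have s4 : ∑ u ∈ Fintype.piFinset (fun _ : Fin ℓ => B), ∑ x ∈ B,
      κ ^ sympWt (Z (Function.update u k x)) ≤
      ∑ u ∈ Fintype.piFinset (fun _ : Fin ℓ => B), T * B.card := by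
    apply Finset.sum_le_sum
    intro u _
    have : ∀ x, Z (Function.update u k x) = M (i, k) • x + Z (Function.update u k 0) := by
      intro x
      have := lin_update (fun j => M (i, j) - M (j, i)) u k x
      simp only [hki, sub_zero] at this
      exact this
    rw [Finset.sum_congr rfl (fun x _ => congrArg (fun z => κ ^ sympWt z) (this x))]
    exact H2 _ _ hik
  rw [s3, Finset.sum_const, Fintype.card_piFinset_const, nsmul_eq_mul, nsmul_eq_mul] at s4
  push_cast at s4
  have : (B.card : ℝ) * ∑ u ∈ Fintype.piFinset (fun _ : Fin ℓ => B), κ ^ sympWt (Z u) ≤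
      B.card * (T * (B.card : ℝ) ^ ℓ) := by
    linarith
  exact le_of_mul_le_mul_left this hV

lemma dep_bound [Fintype F] [DecidableEq F] (B : Finset (Fin n → F × F)) (T : ℝ)
    (H3 : 1 ≤ T * B.card) (ℓ : ℕ) (hT : 0 ≤ T) :
    (((Fintype.piFinset (fun _ : Fin ℓ => B)).filter
      (fun u => ¬ LinearIndependent F u)).card : ℝ) ≤
      (Fintype.card F : ℝ) ^ ℓ * (T * (B.card : ℝ) ^ ℓ) := by
  have hone : ∀ g : Fin ℓ → F, g ≠ 0 →
      (((Fintype.piFinset (fun _ : Fin ℓ => B)).filter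
        (fun u => ∑ j, g j • u j = 0)).card : ℝ) ≤ T * (B.card : ℝ) ^ ℓ := by
    intro g hg
    obtain ⟨i, hi⟩ : ∃ i, g i ≠ 0 := by
      by_contra! h
      exact hg (funext h)
    have s1 := sum_update_avg B i (fun u => if ∑ j, g j • u j = 0 then (1 : ℕ) else 0)
    rw [← Finset.card_filter] at s1
    have s2 : ∑ u ∈ Fintype.piFinset (fun _ : Fin ℓ => B), ∑ x ∈ B,
        (if ∑ j, g j • Function.update u i x j = 0 then (1 : ℕ) else 0) ≤
        ∑ u ∈ Fintype.piFinset (fun _ : Fin ℓ => B), 1 := by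
      apply Finset.sum_le_sum
      intro u _
      rw [← Finset.card_filter, Finset.card_le_one]
      intro x hx y hy
      have hx := (Finset.mem_filter.1 hx).2
      have hy := (Finset.mem_filter.1 hy).2
      rw [lin_update] at hx hy
      have := add_right_cancel (hx.trans hy.symm)
      exact smul_right_injective _ hi this
    rw [s1, Finset.sum_const, Fintype.card_piFinset_const] at s2
    simp only [smul_eq_mul, mul_one] at s2
    have s3 : (B.card : ℝ) * (((Fintype.piFinset (fun _ : Fin ℓ => B)).filter
        (fun u => ∑ j, g j • u j = 0)).card : ℝ) ≤ (B.card : ℝ) ^ ℓ := by exact_mod_cast s2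
    have s4 := mul_le_mul_of_nonneg_left s3 hT
    have s5 := mul_le_mul_of_nonneg_right H3 (Nat.cast_nonneg
      (((Fintype.piFinset (fun _ : Fin ℓ => B)).filter (fun u => ∑ j, g j • u j = 0)).card)
        (α := ℝ))
    linarith
  have hsub : (Fintype.piFinset (fun _ : Fin ℓ => B)).filter
      (fun u => ¬ LinearIndependent F u) ⊆
      (Finset.univ.erase (0 : Fin ℓ → F)).biUnion (fun g =>
        (Fintype.piFinset (fun _ : Fin ℓ => B)).filter (fun u => ∑ j, g j • u j = 0)) := by
    intro u hu
    rw [Finset.mem_filter] at hu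
    obtain ⟨h1, h2⟩ := hu
    rw [Fintype.linearIndependent_iff] at h2
    push Not at h2
    obtain ⟨g, h3, i, h4⟩ := h2
    rw [Finset.mem_biUnion]
    refine ⟨g, Finset.mem_erase.2 ⟨?_, Finset.mem_univ _⟩, Finset.mem_filter.2 ⟨h1, h3⟩⟩
    rintro rfl
    exact h4 rfl
  have h5 := (Finset.card_le_card hsub).trans Finset.card_biUnion_le
  have h6 : ∑ g ∈ Finset.univ.erase (0 : Fin ℓ → F),
      ((((Fintype.piFinset (fun _ : Fin ℓ => B)).filter (fun u => ∑ j, g j • u j = 0)).card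
        : ℕ) : ℝ) ≤ ∑ g ∈ Finset.univ.erase (0 : Fin ℓ → F), T * (B.card : ℝ) ^ ℓ :=
    Finset.sum_le_sum fun g hg => hone g (Finset.mem_erase.1 hg).1
  refine le_trans (by exact_mod_cast h5) (h6.trans ?_)
  rw [Finset.sum_const, nsmul_eq_mul]
  apply mul_le_mul_of_nonneg_right _ (by positivity)
  have : (Finset.univ.erase (0 : Fin ℓ → F)).card ≤ Fintype.card F ^ ℓ := by
    refine (Finset.card_le_univ _).trans ?_
    simp
  exact_mod_cast this

/-- lower triangular positions -/
lemma card_lower (ℓ : ℕ) :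
    ((Finset.univ : Finset (Fin ℓ × Fin ℓ)).filter (fun p => p.2 < p.1)).card =
      ℓ * (ℓ - 1) / 2 := by
  rw [Finset.card_filter, Fintype.sum_prod_type, ← Finset.sum_range_id,
    ← Fin.sum_univ_eq_sum_range (fun i => i) ℓ]
  apply Finset.sum_congr rfl
  intro i _
  rw [← Finset.card_filter]
  rw [show (Finset.univ.filter fun j : Fin ℓ => j < i) = Finset.Iio i by ext; simp]
  simp

lemma indicator_char [Fintype F] [DecidableEq F] (ψ : AddChar F ℂ) (hψ : ψ.IsPrimitive) (ℓ : ℕ)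
    (u : Fin ℓ → Fin n → F × F) :
    ∑ M ∈ Fintype.piFinset (fun p : Fin ℓ × Fin ℓ => if p.2 < p.1 then (Finset.univ : Finset F)
      else {0}), ψ (phase M u) =
    if (∀ i j, sympInner (u i) (u j) = 0) then (Fintype.card F : ℂ) ^ (ℓ * (ℓ - 1) / 2) else 0 := by
  have h1 : ∀ M : Fin ℓ × Fin ℓ → F, ψ (phase M u) =
      ∏ p : Fin ℓ × Fin ℓ, ψ (M p * sympInner (u p.1) (u p.2)) := fun M => addchar_sum ψ _ _
  simp_rw [h1]
  rw [← Finset.prod_univ_sum (fun p : Fin ℓ × Fin ℓ => if p.2 < p.1 then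
    (Finset.univ : Finset F) else {0}) (fun p a => ψ (a * sympInner (u p.1) (u p.2)))]
  have h2 : ∀ p : Fin ℓ × Fin ℓ, ∑ a ∈ (if p.2 < p.1 then (Finset.univ : Finset F) else {0}),
      ψ (a * sympInner (u p.1) (u p.2)) = if p.2 < p.1 then
        (if sympInner (u p.1) (u p.2) = 0 then (Fintype.card F : ℂ) else 0) else 1 := by
    intro p
    by_cases hp : p.2 < p.1
    · simp only [hp, if_true]
      rw [AddChar.sum_mulShift _ hψ]
      push_cast
      rfl
    · simp [hp]
  rw [Finset.prod_congr rfl (fun p _ => h2 p)]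
  split_ifs with h
  · simp only [h, if_true]
    rw [Finset.prod_ite, Finset.prod_const, Finset.prod_const_one, mul_one, card_lower]
  · push Not at h
    obtain ⟨i, j, hij⟩ := h
    rcases lt_trichotomy i j with hlt | heq | hgt
    · apply Finset.prod_eq_zero (Finset.mem_univ (j, i))
      have : sympInner (u j) (u i) ≠ 0 := by
        rw [sympInner_swap]; simpa using hij
      simp [hlt, this]
    · subst heq; exact absurd (sympInner_self _) hij
    · apply Finset.prod_eq_zero (Finset.mem_univ (i, j))
      simp [hgt, hij]

lemma orth_count [Fintype F] [DecidableEq F] (ψ : AddChar F ℂ) (hψ : ψ.IsPrimitive)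
    (B : Finset (Fin n → F × F))
    (hB : B.Nonempty) (κ T : ℝ) (hκ : 0 ≤ κ) (hT : 0 ≤ T)
    (H1 : ∀ z : Fin n → F × F, ‖∑ x ∈ B, ψ (sympInner x z)‖ ≤ κ ^ sympWt z * B.card)
    (H2 : ∀ (a : F) (w : Fin n → F × F), a ≠ 0 →
      ∑ x ∈ B, κ ^ sympWt (a • x + w) ≤ T * B.card)
    (ℓ : ℕ) :
    (B.card : ℝ) ^ ℓ - (Fintype.card F : ℝ) ^ (ℓ * (ℓ - 1) / 2) * (T * (B.card : ℝ) ^ ℓ) ≤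
    (Fintype.card F : ℝ) ^ (ℓ * (ℓ - 1) / 2) *
      ((Fintype.piFinset (fun _ : Fin ℓ => B)).filter
        (fun u => ∀ i j, sympInner (u i) (u j) = 0)).card := by
  set S := Fintype.piFinset (fun p : Fin ℓ × Fin ℓ => if p.2 < p.1 then
    (Finset.univ : Finset F) else {0}) with hS
  set U := Fintype.piFinset (fun _ : Fin ℓ => B) with hU
  set O := (U.filter (fun u => ∀ i j, sympInner (u i) (u j) = 0)).card
  set A := (Fintype.card F : ℝ) ^ (ℓ * (ℓ - 1) / 2) with hA
  have hScard : (S.card : ℝ) = A := by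
    rw [hS, Fintype.card_piFinset, hA, ← card_lower]
    have : ∀ p : Fin ℓ × Fin ℓ, (if p.2 < p.1 then (Finset.univ : Finset F) else {0}).card =
        if p.2 < p.1 then Fintype.card F else 1 := by
      intro p; split_ifs <;> simp
    rw [Finset.prod_congr rfl (fun p _ => this p), Finset.prod_ite, Finset.prod_const,
      Finset.prod_const_one, mul_one]
    push_cast
    rfl
  have e1 : ∑ M ∈ S, ∑ u ∈ U, ψ (phase M u) = ((A * O : ℝ) : ℂ) := by
    rw [Finset.sum_comm, Finset.sum_congr rfl (fun u _ => indicator_char ψ hψ ℓ u),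
      ← Finset.sum_filter, Finset.sum_const, nsmul_eq_mul, hA]
    push_cast
    rw [mul_comm]
  have h0 : (0 : Fin ℓ × Fin ℓ → F) ∈ S := by
    rw [hS, Fintype.mem_piFinset]
    intro p; split_ifs <;> simp
  have e2 : ∑ u ∈ U, ψ (phase 0 u) = (((B.card : ℝ) ^ ℓ : ℝ) : ℂ) := by
    simp [phase, hU]
  rw [← Finset.add_sum_erase _ _ h0, e2] at e1
  have e3 : ‖∑ M ∈ S.erase 0, ∑ u ∈ U, ψ (phase M u)‖ ≤ A * (T * (B.card : ℝ) ^ ℓ) := by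
    refine (norm_sum_le _ _).trans ?_
    refine (Finset.sum_le_sum (g := fun _ => T * (B.card : ℝ) ^ ℓ) fun M hM => ?_).trans ?_
    · rw [Finset.mem_erase] at hM
      refine phase_bound ψ B hB κ T hκ H1 H2 ℓ M (fun p hp => ?_) hM.1
      have := Fintype.mem_piFinset.1 hM.2 p
      simpa [hp] using this
    · rw [Finset.sum_const, nsmul_eq_mul, ← hScard]
      apply mul_le_mul_of_nonneg_right _ (by positivity)
      exact_mod_cast Finset.card_le_card (Finset.erase_subset _ _)
  have e4 : ∑ M ∈ S.erase 0, ∑ u ∈ U, ψ (phase M u) =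
      ((A * O - (B.card : ℝ) ^ ℓ : ℝ) : ℂ) := by
    rw [eq_sub_of_add_eq' e1]; push_cast; rfl
  rw [e4, Complex.norm_real, Real.norm_eq_abs] at e3
  have := neg_le_of_abs_le e3
  linarith

end
/-- For a prime power `q` (realized as the cardinality of a finite field `F`)
and a constant `δ ∈ (0, 1 - 1/q²)`, there exist `c > 0` and `c'' > 0` such that for all
sufficiently large `n`, with `d - 1 = ⌊δn⌋`: for every `ℓ` with `1 ≤ ℓ ≤ c''√n`, the number of
linearly independent pairwise symplectically orthogonal `ℓ`-tuples of vectors of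
`B_q^S(2n, d-1)` is at least `(1 - q^{-cn}) · Vol_q^S(2n,d-1)^ℓ / q^{ℓ(ℓ-1)/2}`. -/
theorem symp_orth_tuple_count_lower_bound
    (q : ℕ) (F : Type) [Field F] [Fintype F] [DecidableEq F] (hF : Fintype.card F = q)
    (δ : ℝ) (hδ0 : 0 < δ) (hδ : δ < 1 - 1 / (q : ℝ) ^ 2) :
    ∃ c : ℝ, 0 < c ∧ ∃ c'' : ℝ, 0 < c'' ∧ ∃ N : ℕ, ∀ n : ℕ, N ≤ n →
      ∀ ℓ : ℕ, 1 ≤ ℓ → (ℓ : ℝ) ≤ c'' * Real.sqrt n →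
        (1 - (q : ℝ) ^ (-(c * (n : ℝ)))) * (volS q n ⌊δ * (n : ℝ)⌋₊ : ℝ) ^ ℓ /
            (q : ℝ) ^ (ℓ * (ℓ - 1) / 2) ≤
          (((Finset.univ : Finset (Fin ℓ → Fin n → F × F)).filter fun u =>
              (∀ i, u i ∈ sympBall F n ⌊δ * (n : ℝ)⌋₊) ∧ LinearIndependent F u ∧
                ∀ i j, sympInner (u i) (u j) = 0).card : ℝ) := by
  subst hF
  have hq2 : (2 : ℝ) ≤ (Fintype.card F : ℝ) := by
    exact_mod_cast Fintype.one_lt_card (α := F)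
  set q : ℝ := (Fintype.card F : ℝ) with hq
  obtain ⟨Q, hQ⟩ : ∃ Q : ℝ, Q = q ^ 2 - 1 := ⟨_, rfl⟩
  have hQ3 : 3 ≤ Q := by rw [hQ]; nlinarith
  have hδ1 : δ < 1 := by
    have : 0 < 1 / q ^ 2 := by positivity
    linarith
  obtain ⟨L, hL⟩ : ∃ L : ℝ, L = 4 * Q / δ := ⟨_, rfl⟩
  have hLδ : L * δ = 4 * Q := by rw [hL]; field_simp
  have hL1 : 1 ≤ L := by rw [hL, le_div_iff₀ hδ0]; linarith
  obtain ⟨κ, θ, hκ0, hκ1, hθ0, hθ1, c1, c2, c3⟩ := const_exist Q L hQ3 hL1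
  have hlogq : 0 < Real.log q := Real.log_pos (by linarith)
  obtain ⟨t, ht⟩ : ∃ t : ℝ, t = - Real.log θ / Real.log q := ⟨_, rfl⟩
  have ht0 : 0 < t := by
    rw [ht]; exact div_pos (neg_pos.2 (Real.log_neg hθ0 hθ1)) hlogq
  have hθt : θ = q ^ (-t) := by
    rw [Real.rpow_def_of_pos (by linarith), ht]
    rw [show Real.log q * -(-Real.log θ / Real.log q) = Real.log θ by field_simp]
    rw [Real.exp_log hθ0]
  refine ⟨t / 4, by positivity, Real.sqrt t / 2, by positivity, ⌈2 / δ⌉₊ + ⌈2 / t⌉₊, ?_⟩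
  intro n hn ℓ hℓ1 hℓ
  have hn1 : 2 ≤ δ * n := by
    have h1 := Nat.le_ceil (2 / δ)
    have h2 : (⌈2 / δ⌉₊ : ℝ) ≤ n := by exact_mod_cast (by omega : ⌈2 / δ⌉₊ ≤ n)
    have := h1.trans h2
    rw [div_le_iff₀ hδ0] at this
    linarith
  have hn2 : 2 ≤ t * n := by
    have h1 := Nat.le_ceil (2 / t)
    have h2 : (⌈2 / t⌉₊ : ℝ) ≤ n := by exact_mod_cast (by omega : ⌈2 / t⌉₊ ≤ n)
    have := h1.trans h2
    rw [div_le_iff₀ ht0] at this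
    linarith
  have hfl := Nat.lt_floor_add_one (δ * n)
  obtain ⟨r, hr⟩ : ∃ r, ⌊δ * (n : ℝ)⌋₊ = r + 1 := by
    have : 1 ≤ ⌊δ * (n : ℝ)⌋₊ := Nat.le_floor (by push_cast; linarith)
    exact ⟨⌊δ * (n : ℝ)⌋₊ - 1, by omega⟩
  rw [hr] at hfl ⊢
  push_cast at hfl
  have hn3 : 2 * Q * n ≤ L * (r + 1) := by
    have h1 : δ * n ≤ 2 * (r + 1) := by linarith
    have h2 := mul_le_mul_of_nonneg_left h1 (by linarith : 0 ≤ L)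
    have h3 : L * (δ * n) = 4 * Q * n := by rw [← mul_assoc, hLδ]
    linarith
  let ψ := AddChar.FiniteField.primitiveChar_to_Complex F
  have hψ : ψ.IsPrimitive := AddChar.FiniteField.primitiveChar_to_Complex_isPrimitive F
  rw [← card_ball_volS (F := F) n (r + 1)]
  set B := sympBall F n (r + 1) with hBdef
  have h0B : (0 : Fin n → F × F) ∈ B := by
    rw [hBdef]
    unfold sympBall
    exact Finset.mem_filter.2 ⟨Finset.mem_univ _, by simp [sympWt]⟩
  have hB : B.Nonempty := ⟨0, h0B⟩
  have H1 := hat_bound ψ hψ n r Q L κ hQ (by linarith) hn3 (by linarith) c1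
  have H2 := fun (a : F) (w : Fin n → F × F) (ha : a ≠ 0) =>
    shift_bound n r Q L κ θ hQ (by linarith) hn3 hκ0 hκ1 hθ0.le c2 c3 a ha w
  have H3 : 1 ≤ θ ^ n * B.card := by
    refine le_trans ?_ (H2 1 0 one_ne_zero)
    have := Finset.single_le_sum (f := fun x : Fin n → F × F => κ ^ sympWt ((1 : F) • x + 0))
      (fun x _ => pow_nonneg (by linarith) _) h0B
    refine le_trans ?_ this
    simp [sympWt]
  have hT : 0 ≤ θ ^ n := by positivity
  have R1 := orth_count ψ hψ B hB κ (θ ^ n) (by linarith) hT H1 H2 ℓ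
  have R2 := dep_bound B (θ ^ n) H3 ℓ hT
  rw [← hq] at R1 R2
  set U := Fintype.piFinset (fun _ : Fin ℓ => B) with hU
  set G := (Finset.univ : Finset (Fin ℓ → Fin n → F × F)).filter fun u =>
              (∀ i, u i ∈ B) ∧ LinearIndependent F u ∧
                ∀ i j, sympInner (u i) (u j) = 0 with hG
  have R3 : (U.filter (fun u => ∀ i j, sympInner (u i) (u j) = 0)).card ≤
      G.card + (U.filter (fun u => ¬ LinearIndependent F u)).card := by
    refine le_trans (Finset.card_le_card ?_) (Finset.card_union_le _ _)
    intro u hu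
    simp only [hU, hG, Finset.mem_union, Finset.mem_filter, Fintype.mem_piFinset,
      Finset.mem_univ, true_and] at hu ⊢
    tauto
  have R3' : ((U.filter (fun u => ∀ i j, sympInner (u i) (u j) = 0)).card : ℝ) ≤
      G.card + (U.filter (fun u => ¬ LinearIndependent F u)).card := by exact_mod_cast R3
  set A := q ^ (ℓ * (ℓ - 1) / 2) with hA
  have hA0 : 0 < A := by positivity
  have hA1 : A ≤ q ^ (ℓ ^ 2) := by
    apply pow_le_pow_right₀ (by linarith)
    refine (Nat.div_le_self _ _).trans ?_
    rw [sq]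
    exact Nat.mul_le_mul_left _ (Nat.sub_le _ _)
  have hA2 : A * q ^ ℓ ≤ q ^ (ℓ ^ 2) := by
    rw [hA, ← pow_add]
    apply pow_le_pow_right₀ (by linarith)
    have h1 := Nat.div_le_self (ℓ * (ℓ - 1)) 2
    have h2 : ℓ * (ℓ - 1) + ℓ = ℓ ^ 2 := by
      obtain ⟨m, rfl⟩ : ∃ m, ℓ = m + 1 := ⟨ℓ - 1, by omega⟩
      simp only [Nat.add_sub_cancel]; ring
    omega
  have hℓ2 : (ℓ : ℝ) ^ 2 ≤ t * n / 4 := by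
    have := pow_le_pow_left₀ (Nat.cast_nonneg ℓ) hℓ 2
    rw [mul_pow, div_pow, Real.sq_sqrt ht0.le, Real.sq_sqrt (Nat.cast_nonneg n)] at this
    linarith
  have hE : 2 * q ^ (ℓ ^ 2) * θ ^ n ≤ q ^ (-(t / 4 * (n : ℝ))) := by
    have e1 : θ ^ n = q ^ (-(t * n)) := by
      rw [hθt, ← Real.rpow_natCast, ← Real.rpow_mul (by linarith)]
      congr 1; ring
    have e2 : q ^ (ℓ ^ 2) = q ^ ((ℓ : ℝ) ^ 2) := by
      rw [← Nat.cast_pow ℓ 2, Real.rpow_natCast]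
    calc 2 * q ^ (ℓ ^ 2) * θ ^ n ≤ q * q ^ (ℓ ^ 2) * θ ^ n := by gcongr
      _ = q ^ (1 + (ℓ : ℝ) ^ 2 + -(t * n)) := by
        rw [e1, e2, Real.rpow_add (by linarith), Real.rpow_add (by linarith), Real.rpow_one]
      _ ≤ _ := by
        apply Real.rpow_le_rpow_of_exponent_le (by linarith)
        linarith
  rw [div_le_iff₀ hA0]
  set W := (B.card : ℝ) ^ ℓ with hW
  have hW0 : 0 ≤ W := pow_nonneg (Nat.cast_nonneg _) _
  have f1 := mul_le_mul_of_nonneg_left R3' hA0.le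
  have f2 := mul_le_mul_of_nonneg_left R2 hA0.le
  have f3 := mul_le_mul_of_nonneg_right hE hW0
  have f4 := mul_le_mul_of_nonneg_right hA1 (mul_nonneg hT hW0)
  have f5 := mul_le_mul_of_nonneg_right hA2 (mul_nonneg hT hW0)
  nlinarith
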